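/- Let K be a positive semiring, let R be a K-relation over a finite set X of attributes and S a K-relation over a finite set Y of attributes. The following statements are equivalent: (a) R and S are consistent; (b) R[X ∩ Y] ≡ S[X ∩ Y]; (c) the supports R' and S' are consistent as ordinary relations (i.e., R'[X ∩ Y] = S'[X ∩ Y]) and R ⋈ S ≡ S ⋈ R; (d) R ≡ (R ⋈ S)[X] and S ≡ (R ⋈ S)[Y] (i.e., the join R ⋈ S witnesses the consistency of R and S). -/

import Mathlib

open Finsupp

variable {A : Type*} [DecidableEq A]

/-- An `X`-tuple: a function assigning to each attribute `a ∈ X` an element of its domain. -/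
def Tup (dom : A → Type*) (X : Finset A) : Type _ := ∀ a ∈ X, dom a

/-- Projection (restriction) of an `X`-tuple to `Y ⊆ X`. -/
def restr (dom : A → Type*) {X Y : Finset A} (h : Y ⊆ X) (t : Tup dom X) : Tup dom Y :=
  fun a ha => t a (h ha)

/-- The marginal `R[Y]` of a `K`-relation `R` over `X`, for `Y ⊆ X`. -/
noncomputable def marg {dom : A → Type*} {K : Type*} [AddCommMonoid K] {X Y : Finset A}
    (h : Y ⊆ X) (R : Tup dom X →₀ K) : Tup dom Y →₀ K :=
  Finsupp.mapDomain (restr dom h) R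

/-- Equivalence up to normalization of two `K`-relations over the same attribute set. -/
def KEquiv {dom : A → Type*} {K : Type*} [MulZeroClass K] {X : Finset A}
    (R S : Tup dom X →₀ K) : Prop :=
  ∃ a b : K, a ≠ 0 ∧ b ≠ 0 ∧ ∀ t, a * R t = b * S t

/-- Merge an `X`-tuple and a `Y`-tuple into an `X ∪ Y`-tuple (values from the first argument
on `X`). -/
def merge {dom : A → Type*} {X Y : Finset A} (r : Tup dom X) (s : Tup dom Y) :
    Tup dom (X ∪ Y) :=
  fun a ha => if h : a ∈ X then r a h else s a ((Finset.mem_union.mp ha).resolve_left h)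

/-- The correcting factor `c_S(u) = ∏_{v ∈ S[Z]', v ≠ u} S[Z](v)`. -/
noncomputable def cFactor {dom : A → Type*} {K : Type*} [CommSemiring K] {Y Z : Finset A}
    (h : Z ⊆ Y) (S : Tup dom Y →₀ K) (u : Tup dom Z) : K :=
  haveI := Classical.decEq (Tup dom Z)
  ∏ v ∈ (marg h S).support.erase u, (marg h S) v

/-- The join of a `K`-relation over `X` and a `K`-relation over `Y`:
`(R ⋈ S)(t) = R(t[X])·S(t[Y])·c_S(t[X ∩ Y])`. -/
noncomputable def kjoin {dom : A → Type*} {K : Type*} [CommSemiring K] {X Y : Finset A}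
    (R : Tup dom X →₀ K) (S : Tup dom Y →₀ K) : Tup dom (X ∪ Y) →₀ K :=
  haveI := Classical.decEq (Tup dom (X ∪ Y))
  Finsupp.onFinset ((R.support ×ˢ S.support).image fun p => merge p.1 p.2)
    (fun t => R (restr dom Finset.subset_union_left t) *
      S (restr dom Finset.subset_union_right t) *
      cFactor Finset.inter_subset_right S (restr dom Finset.inter_subset_union t))
    (by
      intro t ht
      have hR : R (restr dom Finset.subset_union_left t) ≠ 0 :=
        left_ne_zero_of_mul (left_ne_zero_of_mul ht)
      have hS : S (restr dom Finset.subset_union_right t) ≠ 0 :=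
        right_ne_zero_of_mul (left_ne_zero_of_mul ht)
      refine Finset.mem_image.mpr ⟨(restr dom Finset.subset_union_left t,
        restr dom Finset.subset_union_right t),
        Finset.mem_product.mpr ⟨Finsupp.mem_support_iff.mpr hR, Finsupp.mem_support_iff.mpr hS⟩,
        ?_⟩
      funext a ha
      by_cases h : a ∈ X <;> simp [merge, restr, h])

/-- Two `K`-relations (over possibly different attribute sets) are consistent if a single
`K`-relation over the union has marginals equivalent to each of them. -/
def Consistent {dom : A → Type*} {K : Type*} [CommSemiring K] {X Y : Finset A}
    (R : Tup dom X →₀ K) (S : Tup dom Y →₀ K) : Prop :=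
  ∃ T : Tup dom (X ∪ Y) →₀ K,
    KEquiv (marg Finset.subset_union_left T) R ∧ KEquiv (marg Finset.subset_union_right T) S

/-!
Fix a common restriction `u` to `X ∩ Y`. The `X ∪ Y`-tuples over an `X`-tuple `r` with restriction
`u` correspond to the `Y`-tuples with restriction `u`, so
`(R ⋈ S)[X](r) = R(r) · S[X ∩ Y](u) · c_S(u)`. Where `S[X ∩ Y](u) ≠ 0` the last two factors
multiply to the product of all nonzero values of `S[X ∩ Y]`, which no longer depends on `u`. Hence
agreement of the supports on `X ∩ Y` alone gives `R ≡ (R ⋈ S)[X]` and, exchanging the roles,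
`S ≡ (S ⋈ R)[Y]`; commutativity of the join turns the latter into `S ≡ (R ⋈ S)[Y]`. This is the
step (c) → (d) of the cycle (a) → (b) → (c) → (d) → (a).
-/

section Tuples

variable {dom : A → Type*} {X Y : Finset A}

theorem restr_merge_left (r : Tup dom X) (s : Tup dom Y) :
    restr dom Finset.subset_union_left (merge r s) = r := by
  funext a ha
  simp [restr, merge, ha]

theorem restr_merge_right {r : Tup dom X} {s : Tup dom Y}
    (h : restr dom (Finset.inter_subset_right : X ∩ Y ⊆ Y) s =
      restr dom (Finset.inter_subset_left : X ∩ Y ⊆ X) r) :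
    restr dom Finset.subset_union_right (merge r s) = s := by
  funext a haY
  by_cases haX : a ∈ X
  · have hrs : s a haY = r a haX := congrFun₂ h a (Finset.mem_inter.2 ⟨haX, haY⟩)
    simp [restr, merge, haX, hrs]
  · simp [restr, merge, haX]

theorem merge_restr_restr (t : Tup dom (X ∪ Y)) :
    merge (restr dom Finset.subset_union_left t) (restr dom Finset.subset_union_right t) = t := by
  funext a ha
  by_cases haX : a ∈ X <;> simp [merge, restr, haX]

/-- The `X ∪ Y`-tuples extending an `X`-tuple `r` correspond to the `Y`-tuples that agree with `r`
on `X ∩ Y`. -/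
def unionFiberEquiv (r : Tup dom X) :
    {t : Tup dom (X ∪ Y) // restr dom Finset.subset_union_left t = r} ≃
      {s : Tup dom Y // restr dom (Finset.inter_subset_right : X ∩ Y ⊆ Y) s =
        restr dom Finset.inter_subset_left r} where
  toFun t := ⟨restr dom Finset.subset_union_right t.1,
    congrArg (restr dom Finset.inter_subset_left) t.2⟩
  invFun s := ⟨merge r s.1, restr_merge_left r s.1⟩
  left_inv := by
    rintro ⟨t, rfl⟩
    exact Subtype.ext (merge_restr_restr t)
  right_inv s := Subtype.ext (restr_merge_right s.2)

end Tuples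

section Marginals

variable {α : Type*} {dom : α → Type*} {K : Type*} {X Y Z : Finset α}

theorem marg_apply [AddCommMonoid K] (h : Y ⊆ X) (R : Tup dom X →₀ K) (u : Tup dom Y) :
    marg h R u = ∑ᶠ t : {t : Tup dom X // restr dom h t = u}, R t := by
  classical
  calc
    marg h R u = ∑ t ∈ R.support with restr dom h t = u, R t := by
      simp [marg, Finsupp.mapDomain, Finsupp.sum, Finsupp.single_apply, Finset.sum_filter]
    _ = ∑ᶠ (t) (_ : restr dom h t = u), R t :=
      (finsum_cond_eq_sum_of_cond_iff _ fun ht => by simp [ht]).symm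
    _ = ∑ᶠ t : {t : Tup dom X // restr dom h t = u}, R t :=
      (finsum_subtype_eq_finsum_cond (restr dom h · = u)).symm

theorem marg_marg [AddCommMonoid K] (h : Y ⊆ X) (h' : Z ⊆ Y) (R : Tup dom X →₀ K) :
    marg h' (marg h R) = marg (h'.trans h) R :=
  Finsupp.mapDomain_comp.symm

theorem marg_apply_of_superset [AddCommMonoid K] (h : Y ⊆ X) (h' : X ⊆ Y) (R : Tup dom X →₀ K)
    (t : Tup dom Y) : marg h R t = R (restr dom h' t) :=
  have hinj : Function.Injective (restr dom h) := fun _ _ heq => congrArg (restr dom h') heq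
  Finsupp.mapDomain_apply hinj R (restr dom h' t)

theorem coe_support_marg [AddCommMonoid K] [Subsingleton (AddUnits K)] (h : Y ⊆ X)
    (R : Tup dom X →₀ K) :
    ((marg h R).support : Set (Tup dom Y)) = restr dom h '' R.support := by
  classical
  rw [marg, Finsupp.mapDomain_support_of_subsingletonAddUnits, Finset.coe_image]

theorem marg_restr_ne_zero [AddCommMonoid K] [Subsingleton (AddUnits K)] (h : Y ⊆ X)
    {R : Tup dom X →₀ K} {t : Tup dom X} (ht : R t ≠ 0) : marg h R (restr dom h t) ≠ 0 := by
  rw [← Finsupp.mem_support_iff, ← Finset.mem_coe, coe_support_marg]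
  exact Set.mem_image_of_mem _ (Finsupp.mem_support_iff.2 ht)

end Marginals

namespace KEquiv

variable {α : Type*} {dom : α → Type*} {K : Type*} {X Y : Finset α}

theorem symm [MulZeroClass K] {R S : Tup dom X →₀ K} : KEquiv R S → KEquiv S R
  | ⟨a, b, ha, hb, hab⟩ => ⟨b, a, hb, ha, fun t => (hab t).symm⟩

theorem trans [CommMonoidWithZero K] [NoZeroDivisors K] {R S T : Tup dom X →₀ K} :
    KEquiv R S → KEquiv S T → KEquiv R T
  | ⟨a, b, ha, hb, hab⟩, ⟨c, d, hc, hd, hcd⟩ =>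
    ⟨c * a, b * d, mul_ne_zero hc ha, mul_ne_zero hb hd, fun t => by
      rw [mul_assoc, hab, mul_left_comm, hcd, mul_assoc]⟩

theorem support_eq [MulZeroClass K] [NoZeroDivisors K] {R S : Tup dom X →₀ K} :
    KEquiv R S → R.support = S.support
  | ⟨a, b, ha, hb, hab⟩ => by
    ext t
    simpa [ha, hb] using congrArg (· ≠ 0) (hab t)

theorem marg [NonUnitalNonAssocSemiring K] (h : Y ⊆ X) {R S : Tup dom X →₀ K} :
    KEquiv R S → KEquiv (marg h R) (marg h S)
  | ⟨a, b, ha, hb, hab⟩ => ⟨a, b, ha, hb, fun u => by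
    have finite_support (T : Tup dom X →₀ K) :
        Function.HasFiniteSupport fun t : {t : Tup dom X // restr dom h t = u} => T t :=
      T.hasFiniteSupport.comp_of_injective Subtype.val_injective
    rw [marg_apply, marg_apply, mul_finsum' _ _ (finite_support R),
      mul_finsum' _ _ (finite_support S)]
    exact finsum_congr fun t => hab t⟩

theorem image_support_eq [NonUnitalNonAssocSemiring K] [NoZeroDivisors K]
    [Subsingleton (AddUnits K)] {Z : Finset α} {hX : Z ⊆ X} {hY : Z ⊆ Y} {R : Tup dom X →₀ K}
    {S : Tup dom Y →₀ K} (h : KEquiv (_root_.marg hX R) (_root_.marg hY S)) :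
    restr dom hX '' R.support = restr dom hY '' S.support := by
  rw [← coe_support_marg, ← coe_support_marg, h.support_eq]

end KEquiv

section CorrectingFactor

variable {α : Type*} {dom : α → Type*} {K : Type*} [CommSemiring K] {X Y Z : Finset α}

theorem marg_mul_cFactor (h : Z ⊆ Y) {S : Tup dom Y →₀ K} {u : Tup dom Z}
    (hu : marg h S u ≠ 0) :
    marg h S u * cFactor h S u = ∏ v ∈ (marg h S).support, marg h S v :=
  let _ := Classical.decEq (Tup dom Z)
  Finset.mul_prod_erase _ _ (Finsupp.mem_support_iff.2 hu)

theorem cFactor_restr {Z' : Finset α} (h : Z ⊆ X) (h' : Z' ⊆ X) (hZ : Z' = Z)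
    (R : Tup dom X →₀ K) (u : Tup dom Z) :
    cFactor h' R (restr dom hZ.le u) = cFactor h R u := by
  subst hZ
  rfl

theorem pow_mul_cFactor_eq {hX : Z ⊆ X} {hY : Z ⊆ Y} {R : Tup dom X →₀ K} {S : Tup dom Y →₀ K}
    {a b : K} (hab : ∀ v, a * marg hX R v = b * marg hY S v)
    (hsupp : (marg hX R).support = (marg hY S).support) {u : Tup dom Z} (hu : marg hY S u ≠ 0) :
    a ^ ((marg hY S).support.card - 1) * cFactor hX R u =
      b ^ ((marg hY S).support.card - 1) * cFactor hY S u := by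
  let _ := Classical.decEq (Tup dom Z)
  rw [← Finset.card_erase_of_mem (Finsupp.mem_support_iff.2 hu), cFactor, cFactor, hsupp,
    Finset.pow_card_mul_prod, Finset.pow_card_mul_prod]
  exact Finset.prod_congr rfl fun v _ => hab v

end CorrectingFactor

section Join

variable {dom : A → Type*} {K : Type*} [CommSemiring K] {X Y : Finset A}
  {R : Tup dom X →₀ K} {S : Tup dom Y →₀ K}

theorem kjoin_apply (R : Tup dom X →₀ K) (S : Tup dom Y →₀ K) (t : Tup dom (X ∪ Y)) :
    kjoin R S t = R (restr dom Finset.subset_union_left t) *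
      S (restr dom Finset.subset_union_right t) *
      cFactor Finset.inter_subset_right S (restr dom Finset.inter_subset_union t) :=
  rfl

theorem marg_kjoin_swap_apply (R : Tup dom X →₀ K) (S : Tup dom Y →₀ K) (t : Tup dom (X ∪ Y)) :
    marg (Finset.union_comm X Y).le (kjoin S R) t =
      R (restr dom Finset.subset_union_left t) * S (restr dom Finset.subset_union_right t) *
        cFactor Finset.inter_subset_left R (restr dom Finset.inter_subset_union t) := by
  rw [marg_apply_of_superset _ (Finset.union_comm Y X).le, kjoin_apply,
    ← cFactor_restr _ Finset.inter_subset_right (Finset.inter_comm Y X), mul_comm (S _)]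
  rfl

theorem marg_kjoin_left_apply (R : Tup dom X →₀ K) (S : Tup dom Y →₀ K) (r : Tup dom X) :
    marg Finset.subset_union_left (kjoin R S) r =
      R r * (marg Finset.inter_subset_right S (restr dom Finset.inter_subset_left r) *
        cFactor Finset.inter_subset_right S (restr dom Finset.inter_subset_left r)) := by
  set u : Tup dom (X ∩ Y) := restr dom Finset.inter_subset_left r
  set c : K := cFactor Finset.inter_subset_right S u
  have kjoin_fiber (t : {t : Tup dom (X ∪ Y) // restr dom Finset.subset_union_left t = r}) :
      kjoin R S t = R r * (S (unionFiberEquiv r t) * c) := by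
    obtain ⟨t, rfl⟩ := t
    exact mul_assoc _ _ _
  have finite_support : Function.HasFiniteSupport
      fun s : {s : Tup dom Y // restr dom Finset.inter_subset_right s = u} => S s :=
    S.hasFiniteSupport.comp_of_injective Subtype.val_injective
  rw [marg_apply, marg_apply, finsum_mul' _ _ finite_support, mul_finsum']
  · exact finsum_eq_of_bijective _ (unionFiberEquiv r).bijective kjoin_fiber
  · exact finite_support.subset (Function.support_mul_subset_left _ _)

theorem kequiv_marg_kjoin_left [Nontrivial K] [NoZeroDivisors K] [Subsingleton (AddUnits K)]
    (h : restr dom (Finset.inter_subset_left : X ∩ Y ⊆ X) '' R.support ⊆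
      restr dom (Finset.inter_subset_right : X ∩ Y ⊆ Y) '' S.support) :
    KEquiv R (marg Finset.subset_union_left (kjoin R S)) := by
  set P : K := ∏ v ∈ (marg (Finset.inter_subset_right : X ∩ Y ⊆ Y) S).support,
    marg Finset.inter_subset_right S v
  have hP : P ≠ 0 := Finset.prod_ne_zero_iff.2 fun _ => Finsupp.mem_support_iff.1
  refine ⟨P, 1, hP, one_ne_zero, fun r => ?_⟩
  rw [marg_kjoin_left_apply, one_mul]
  rcases eq_or_ne (R r) 0 with hr | hr
  · rw [hr, mul_zero, zero_mul]
  · have hmarg : marg Finset.inter_subset_right S (restr dom Finset.inter_subset_left r) ≠ 0 := by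
      rw [← Finsupp.mem_support_iff, ← Finset.mem_coe, coe_support_marg]
      exact h ⟨r, Finsupp.mem_support_iff.2 hr, rfl⟩
    rw [marg_mul_cFactor _ hmarg, mul_comm]

theorem kequiv_marg_kjoin_right [Nontrivial K] [NoZeroDivisors K] [Subsingleton (AddUnits K)]
    (h : restr dom (Finset.inter_subset_right : X ∩ Y ⊆ Y) '' S.support ⊆
      restr dom (Finset.inter_subset_left : X ∩ Y ⊆ X) '' R.support)
    (hcomm : KEquiv (kjoin R S) (marg (Finset.union_comm X Y).le (kjoin S R))) :
    KEquiv S (marg Finset.subset_union_right (kjoin R S)) := by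
  have hswap : restr dom (Finset.inter_subset_left : Y ∩ X ⊆ Y) '' S.support ⊆
      restr dom (Finset.inter_subset_right : Y ∩ X ⊆ X) '' R.support := by
    rintro _ ⟨s, hs, rfl⟩
    obtain ⟨r, hr, hrs⟩ := h ⟨s, hs, rfl⟩
    exact ⟨r, hr, congrArg (restr dom (Finset.inter_comm Y X).le) hrs⟩
  have hmarg := hcomm.marg (Finset.subset_union_right : Y ⊆ X ∪ Y)
  rw [marg_marg] at hmarg
  exact (kequiv_marg_kjoin_left hswap).trans hmarg.symm

theorem Consistent.kequiv_marg_inter [NoZeroDivisors K] (h : Consistent R S) :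
    KEquiv (marg (Finset.inter_subset_left : X ∩ Y ⊆ X) R)
      (marg (Finset.inter_subset_right : X ∩ Y ⊆ Y) S) := by
  obtain ⟨T, hR, hS⟩ := h
  have hTR := hR.marg (Finset.inter_subset_left : X ∩ Y ⊆ X)
  have hTS := hS.marg (Finset.inter_subset_right : X ∩ Y ⊆ Y)
  rw [marg_marg] at hTR hTS
  exact hTR.symm.trans hTS

theorem kjoin_kequiv_swap [NoZeroDivisors K] [Subsingleton (AddUnits K)]
    (h : KEquiv (marg (Finset.inter_subset_left : X ∩ Y ⊆ X) R)
      (marg (Finset.inter_subset_right : X ∩ Y ⊆ Y) S)) :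
    KEquiv (kjoin R S) (marg (Finset.union_comm X Y).le (kjoin S R)) := by
  have ⟨a, b, ha, hb, hab⟩ := h
  set n : ℕ := (marg (Finset.inter_subset_right : X ∩ Y ⊆ Y) S).support.card - 1
  refine ⟨b ^ n, a ^ n, pow_ne_zero _ hb, pow_ne_zero _ ha, fun t => ?_⟩
  rw [marg_kjoin_swap_apply, kjoin_apply, mul_left_comm, mul_left_comm (a ^ n)]
  rcases eq_or_ne (S (restr dom Finset.subset_union_right t)) 0 with hs | hs
  · simp only [hs, mul_zero, zero_mul]
  · exact congrArg _ (pow_mul_cFactor_eq hab h.support_eq (marg_restr_ne_zero _ hs)).symm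

end Join

/-- Characterizations of consistency of two K-relations over a positive semiring:
(a) consistency; (b) equivalent marginals on the common attributes; (c) consistent supports
plus commutativity of the join up to equivalence; (d) the join witnesses the consistency. -/
theorem statement6 {A : Type*} [DecidableEq A] (dom : A → Type*) (K : Type*)
    [CommSemiring K] [Nontrivial K] [NoZeroDivisors K]
    (hplus : ∀ a b : K, a + b = 0 → a = 0 ∧ b = 0)
    (X Y : Finset A) (R : Tup dom X →₀ K) (S : Tup dom Y →₀ K) :
    (Consistent R S ↔
      KEquiv (marg (Finset.inter_subset_left : X ∩ Y ⊆ X) R)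
        (marg (Finset.inter_subset_right : X ∩ Y ⊆ Y) S)) ∧
    (Consistent R S ↔
      (restr dom (Finset.inter_subset_left : X ∩ Y ⊆ X) '' (R.support : Set (Tup dom X)) =
        restr dom (Finset.inter_subset_right : X ∩ Y ⊆ Y) '' (S.support : Set (Tup dom Y)) ∧
       KEquiv (kjoin R S) (marg ((Finset.union_comm X Y).le) (kjoin S R)))) ∧
    (Consistent R S ↔
      (KEquiv R (marg Finset.subset_union_left (kjoin R S)) ∧
       KEquiv S (marg Finset.subset_union_right (kjoin R S)))) := by
  have : Subsingleton (AddUnits K) :=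
    subsingleton_of_forall_eq 0 fun u => AddUnits.ext (hplus _ _ u.val_neg).1
  have tfae : List.TFAE [
      Consistent R S,
      KEquiv (marg (Finset.inter_subset_left : X ∩ Y ⊆ X) R)
        (marg (Finset.inter_subset_right : X ∩ Y ⊆ Y) S),
      restr dom (Finset.inter_subset_left : X ∩ Y ⊆ X) '' R.support =
          restr dom (Finset.inter_subset_right : X ∩ Y ⊆ Y) '' S.support ∧
        KEquiv (kjoin R S) (marg (Finset.union_comm X Y).le (kjoin S R)),
      KEquiv R (marg Finset.subset_union_left (kjoin R S)) ∧
        KEquiv S (marg Finset.subset_union_right (kjoin R S))] := by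
    tfae_have 1 → 2 := Consistent.kequiv_marg_inter
    tfae_have 2 → 3 := fun h => ⟨h.image_support_eq, kjoin_kequiv_swap h⟩
    tfae_have 3 → 4 := fun ⟨hsupp, hcomm⟩ =>
      ⟨kequiv_marg_kjoin_left hsupp.le, kequiv_marg_kjoin_right hsupp.ge hcomm⟩
    tfae_have 4 → 1 := fun ⟨hR, hS⟩ => ⟨kjoin R S, hR.symm, hS.symm⟩
    tfae_finish
  exact ⟨tfae.out 0 1, tfae.out 0 2, tfae.out 0 3⟩
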